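/- Let D be a dictionary in a real Hilbert space X whose symmetric convex hull co(D) is compact, and let f ∈ X with ‖f‖_{L1(D)} < ∞. Then the best n-term approximation error satisfies E_n(f,D) ≤ ((n! V_n)^{1/n} / √n) · ‖f‖_{L1(D)} · ε_n(co(D)) for all n ≥ 1. -/

import Mathlib

open scoped RealInnerProductSpace

/-- Dyadic entropy number: infimum of all `ε > 0` such that `K` is covered by `2^n`
balls of radius `ε`. -/
noncomputable def entropyNumber {X : Type*} [NormedAddCommGroup X] (n : ℕ) (K : Set X) : ℝ :=
  sInf {ε : ℝ | 0 < ε ∧ ∃ c : Fin (2 ^ n) → X, K ⊆ ⋃ i, Metric.closedBall (c i) ε}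

/-- Symmetric (absolutely) convex hull: closure of the set of finite sums `∑ cᵢ gᵢ`
with `gᵢ ∈ K` and `∑ |cᵢ| ≤ 1`. -/
noncomputable def symConvexHull {X : Type*} [NormedAddCommGroup X] [NormedSpace ℝ X]
    (K : Set X) : Set X :=
  closure {x : X | ∃ (m : ℕ) (c : Fin m → ℝ) (g : Fin m → X),
    (∀ i, g i ∈ K) ∧ (∑ i, |c i|) ≤ 1 ∧ x = ∑ i, c i • g i}

/-- Volume of the unit Euclidean ball in `ℝⁿ`. -/
noncomputable def unitBallVol (n : ℕ) : ℝ :=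
  Real.pi ^ ((n : ℝ) / 2) / Real.Gamma ((n : ℝ) / 2 + 1)

/-- Span of the first `n` terms of a sequence. -/
noncomputable def spanFirst {X : Type*} [NormedAddCommGroup X] [NormedSpace ℝ X]
    (f : ℕ → X) (n : ℕ) : Submodule ℝ X :=
  Submodule.span ℝ (f '' {i | i < n})

/-- The weak greedy algorithm with parameter `γ`: `f n` (the `(n+1)`-st iterate) lies in `K`
and its distance to the span of the previous iterates is at least `γ` times that of any
other element of `K`. -/
def IsWeakGreedy {X : Type*} [NormedAddCommGroup X] [NormedSpace ℝ X]
    (γ : ℝ) (K : Set X) (f : ℕ → X) : Prop :=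
  ∀ n : ℕ, f n ∈ K ∧ ∀ g ∈ K,
    γ * Metric.infDist g (spanFirst f n : Set X) ≤ Metric.infDist (f n) (spanFirst f n : Set X)

/-- The greedy error `σ_n(K) = sup_{f ∈ K} dist(f, span{f_1,…,f_n})`. -/
noncomputable def greedyError {X : Type*} [NormedAddCommGroup X] [NormedSpace ℝ X]
    (K : Set X) (f : ℕ → X) (n : ℕ) : ℝ :=
  sSup ((fun g => Metric.infDist g (spanFirst f n : Set X)) '' K)

/-- Kolmogorov `n`-width. -/
noncomputable def kolmogorovWidth {X : Type*} [NormedAddCommGroup X] [NormedSpace ℝ X]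
    (n : ℕ) (K : Set X) : ℝ :=
  sInf {d : ℝ | ∃ Y : Submodule ℝ X, FiniteDimensional ℝ Y ∧ Module.finrank ℝ Y ≤ n ∧
    d = sSup ((fun g => Metric.infDist g (Y : Set X)) '' K)}

/-- `f` admits an `ℓ¹` representation over the dictionary `D`. -/
def HasL1Rep {X : Type*} [NormedAddCommGroup X] [NormedSpace ℝ X] (D : Set X) (f : X) : Prop :=
  ∃ (c : ℕ → ℝ) (g : ℕ → X), (∀ i, g i ∈ D) ∧ Summable (fun i => |c i|) ∧
    HasSum (fun i => c i • g i) f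

/-- The variation norm `‖f‖_{L₁(D)}`. -/
noncomputable def varNorm {X : Type*} [NormedAddCommGroup X] [NormedSpace ℝ X]
    (D : Set X) (f : X) : ℝ :=
  sInf {t : ℝ | ∃ (c : ℕ → ℝ) (g : ℕ → X), (∀ i, g i ∈ D) ∧ Summable (fun i => |c i|) ∧
    HasSum (fun i => c i • g i) f ∧ t = ∑' i, |c i|}

/-- The orthogonal greedy algorithm with target `f`: `fa 0 = 0`; at each step `g n ∈ D`
maximizes `|⟨g, f - fa n⟩|` over `D`, and `fa (n+1)` is the orthogonal projection of `f`
onto `span{g 0, …, g n}`. -/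
def IsOGA {X : Type*} [NormedAddCommGroup X] [InnerProductSpace ℝ X]
    (D : Set X) (f : X) (g fa : ℕ → X) : Prop :=
  fa 0 = 0 ∧ ∀ n : ℕ,
    g n ∈ D ∧ (∀ h ∈ D, |⟪h, f - fa n⟫| ≤ |⟪g n, f - fa n⟫|) ∧
    fa (n + 1) ∈ Submodule.span ℝ (g '' {i | i ≤ n}) ∧
    ∀ w ∈ Submodule.span ℝ (g '' {i | i ≤ n}), ⟪f - fa (n + 1), w⟫ = 0

/-- Best `n`-term approximation error `E_n(f, D)`. -/
noncomputable def bestNTermError {X : Type*} [NormedAddCommGroup X] [NormedSpace ℝ X]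
    (D : Set X) (n : ℕ) (f : X) : ℝ :=
  sInf {r : ℝ | ∃ (c : Fin n → ℝ) (g : Fin n → X), (∀ i, g i ∈ D) ∧ r = ‖f - ∑ i, c i • g i‖}

/-- The K-functional `K(t, g)` between `X` and `L₁(D)`. -/
noncomputable def Kfunctional {X : Type*} [NormedAddCommGroup X] [NormedSpace ℝ X]
    (D : Set X) (t : ℝ) (gg : X) : ℝ :=
  sInf {s : ℝ | ∃ h : X, HasL1Rep D h ∧ s = ‖gg - h‖ + t * varNorm D h}

/-- The interpolation norm `‖g‖_θ = sup_{t > 0} t^{-θ} K(t, g)`. -/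
noncomputable def interpNorm {X : Type*} [NormedAddCommGroup X] [NormedSpace ℝ X]
    (D : Set X) (θ : ℝ) (gg : X) : ℝ :=
  sSup ((fun t => t ^ (-θ) * Kfunctional D t gg) '' Set.Ioi (0 : ℝ))


/-!
Write `f = ∑ aᵢ hᵢ` and `t = ∑ |aᵢ|`. If `r` is the residual of `f` after projecting onto a finite
dimensional subspace, then `‖r‖² = ⟪r, f⟫ ≤ t |⟪r, hᵢ⟫|` for some `i`. Selecting such elements one
after the other gives `g₀, g₁, …` in `D`, with Gram–Schmidt vectors `uₖ` and residuals `rₖ`, for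
which `‖rₖ₊₁‖² ≤ ‖rₖ‖² - ‖rₖ‖⁴ / (t ‖uₖ‖)²`. Hence
`∑_{k < n} (t ‖uₖ‖)⁻² ≤ ‖rₙ‖⁻²`, and the inequality of harmonic and geometric means yields
`√n ‖rₙ‖ ≤ t (∏ ‖uₖ‖)^(1/n)`.

The product is a volume ratio: the cross-polytope spanned by `g₀, …, gₙ₋₁` lies in `co(D)` and has
`n`-dimensional volume `2ⁿ/n! ∏ ‖uₖ‖`, which is at most `2ⁿ Vₙ εⁿ` once `co(D)` is covered by
`2ⁿ` balls of radius `ε`.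
-/

open InnerProductSpace (gramSchmidt gramSchmidtNormed)
open MeasureTheory Metric

section RealInequalities

theorem sum_le_inv_of_le_sub_mul_sq {a b : ℕ → ℝ} {n : ℕ} (ha : 0 < a n)
    (hb : ∀ k < n, 0 ≤ b k) (hab : ∀ k < n, a (k + 1) ≤ a k - b k * a k ^ 2) :
    ∑ k ∈ Finset.range n, b k ≤ (a n)⁻¹ := by
  induction n with
  | zero => simpa using ha.le
  | succ n ih =>
    have hbn : 0 ≤ b n := hb n n.lt_succ_self
    have hstep : a (n + 1) ≤ a n - b n * a n ^ 2 := hab n n.lt_succ_self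
    have han : 0 < a n := ha.trans_le (hstep.trans (sub_le_self _ (by positivity)))
    have hsum : ∑ k ∈ Finset.range n, b k ≤ (a n)⁻¹ :=
      ih han (fun k hk => hb k (hk.trans n.lt_succ_self))
        fun k hk => hab k (hk.trans n.lt_succ_self)
    rw [Finset.sum_range_succ, ← one_div, le_div_iff₀ ha]
    calc (∑ k ∈ Finset.range n, b k + b n) * a (n + 1)
        ≤ ((a n)⁻¹ + b n) * (a n - b n * a n ^ 2) := by gcongr
      _ = 1 - (b n * a n) ^ 2 := by field_simp; ring
      _ ≤ 1 := sub_le_self _ (sq_nonneg _)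

theorem card_le_sum_inv_mul_prod_rpow {ι : Type*} (s : Finset ι) {z : ι → ℝ}
    (hz : ∀ i ∈ s, 0 < z i) :
    (s.card : ℝ) ≤ (∑ i ∈ s, (z i)⁻¹) * (∏ i ∈ s, z i) ^ ((s.card : ℝ)⁻¹) := by
  rcases s.eq_empty_or_nonempty with rfl | hs
  · simp
  have hsum : 0 < ∑ i ∈ s, (z i)⁻¹ := Finset.sum_pos (fun i hi => inv_pos.2 (hz i hi)) hs
  rw [← div_le_iff₀' hsum]
  simpa using Real.harm_mean_le_geom_mean s hs (fun _ => 1) z (fun _ _ => one_pos)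
    (by simpa using hs) hz

theorem exists_le_tsum_abs_mul_abs {ι : Type*} [Nonempty ι] {c x : ι → ℝ} {s : ℝ}
    (hc : Summable fun i => |c i|) (hs : HasSum (fun i => c i * x i) s) :
    ∃ i, s ≤ (∑' i, |c i|) * |x i| := by
  by_contra! hlt
  set t := ∑' i, |c i|
  have ht : 0 ≤ t := tsum_nonneg fun i => abs_nonneg _
  have hterm : ∀ i, t * (c i * x i) ≤ |c i| * (t * |x i|) := fun i => by
    rw [mul_left_comm |c i|, ← abs_mul]
    exact mul_le_mul_of_nonneg_left (le_abs_self _) ht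
  by_cases hzero : ∀ i, c i = 0
  · have ht0 : t = 0 := by simp [t, hzero]
    have hs0 : s = 0 := hs.unique (by simp [hzero])
    simpa [ht0, hs0] using hlt (Classical.arbitrary ι)
  · push Not at hzero
    obtain ⟨i, hi⟩ := hzero
    refine (hasSum_lt (i := i) (fun j => (hterm j).trans ?_) ((hterm i).trans_lt ?_)
      (hs.mul_left t) (hc.hasSum.mul_right s)).false
    · exact mul_le_mul_of_nonneg_left (hlt j).le (abs_nonneg _)
    · exact mul_lt_mul_of_pos_left (hlt i) (abs_pos.2 hi)

theorem le_mul_csInf {S : Set ℝ} (hS : S.Nonempty) {x k : ℝ} (hk : 0 ≤ k)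
    (h : ∀ s ∈ S, x ≤ k * s) : x ≤ k * sInf S := by
  rw [← smul_eq_mul, ← Real.sInf_smul_of_nonneg hk]
  exact le_csInf hS.smul_set (Set.forall_mem_image.2 h)

end RealInequalities

section Projections

variable {𝕜 E : Type*} [RCLike 𝕜] [NormedAddCommGroup E] [InnerProductSpace 𝕜 E]

theorem inner_starProjection_starProjection (K : Submodule 𝕜 E) [K.HasOrthogonalProjection]
    (x y : E) :
    inner 𝕜 (K.starProjection x) (K.starProjection y) = inner 𝕜 (K.starProjection x) y := by
  rw [← Submodule.inner_starProjection_left_eq_right,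
    Submodule.starProjection_eq_self_iff.2 (Submodule.starProjection_apply_mem K x)]

variable {ι : Type*} [LinearOrder ι] [LocallyFiniteOrderBot ι] [WellFoundedLT ι]

theorem gramSchmidt_mem_orthogonal (f : ι → E) (n : ι) :
    gramSchmidt 𝕜 f n ∈ (Submodule.span 𝕜 (f '' Set.Iio n))ᗮ := by
  refine Submodule.isOrtho_span.2 ?_ (Submodule.mem_span_singleton_self _)
  rintro _ rfl _ ⟨i, hi, rfl⟩
  exact InnerProductSpace.gramSchmidt_inv_triangular 𝕜 f hi

theorem sub_gramSchmidt_mem_span (f : ι → E) (n : ι) :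
    f n - gramSchmidt 𝕜 f n ∈ Submodule.span 𝕜 (f '' Set.Iio n) := by
  rw [InnerProductSpace.gramSchmidt_def, sub_sub_cancel, ← InnerProductSpace.span_gramSchmidt_Iio]
  refine Submodule.sum_mem _ fun i hi => ?_
  have hui : gramSchmidt 𝕜 f i ∈ Submodule.span 𝕜 (gramSchmidt 𝕜 f '' Set.Iio n) :=
    Submodule.subset_span ⟨i, Finset.mem_Iio.1 hi, rfl⟩
  exact (Submodule.span_singleton_le_iff_mem _ _).2 hui (Submodule.starProjection_apply_mem _ _)

theorem gramSchmidt_eq_starProjection_orthogonal (f : ι → E) (n : ι)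
    [(Submodule.span 𝕜 (f '' Set.Iio n)).HasOrthogonalProjection] :
    gramSchmidt 𝕜 f n = (Submodule.span 𝕜 (f '' Set.Iio n))ᗮ.starProjection (f n) :=
  (Submodule.eq_starProjection_of_mem_orthogonal (gramSchmidt_mem_orthogonal f n)
    (Submodule.le_orthogonal_orthogonal _ (sub_gramSchmidt_mem_span f n))).symm

theorem inner_gramSchmidt_self (f : ι → E) (n : ι) :
    inner 𝕜 (gramSchmidt 𝕜 f n) (f n) = (‖gramSchmidt 𝕜 f n‖ : 𝕜) ^ 2 := by
  have h := (Submodule.mem_orthogonal' _ _).1 (gramSchmidt_mem_orthogonal (𝕜 := 𝕜) f n) _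
    (sub_gramSchmidt_mem_span f n)
  rwa [inner_sub_right, sub_eq_zero, inner_self_eq_norm_sq_to_K] at h

theorem gramSchmidt_comp_finVal (f : ℕ → E) {n : ℕ} (i : Fin n) :
    gramSchmidt 𝕜 (fun j : Fin n => f j) i = gramSchmidt 𝕜 f i := by
  induction i using WellFoundedLT.induction with
  | ind i ih =>
    rw [InnerProductSpace.gramSchmidt_def, InnerProductSpace.gramSchmidt_def,
      ← Fin.map_valEmbedding_Iio, Finset.sum_map]
    congr 1
    refine Finset.sum_congr rfl fun j hj => ?_
    rw [ih j (Finset.mem_Iio.1 hj), Fin.valEmbedding_apply]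

end Projections

section Volume

variable {ι κ : Type*} [Fintype ι]
  {X : Type*} [NormedAddCommGroup X] [InnerProductSpace ℝ X]

/-- The closed unit ball of the `ℓ¹` norm on `ι → ℝ`, whose image under `x ↦ ∑ i, x i • v i` is
the absolutely convex hull of the vectors `v i`. The type `ι → ℝ` itself carries the sup norm. -/
def crossPolytope (ι : Type*) [Fintype ι] : Set (ι → ℝ) := {x | ∑ i, |x i| ≤ 1}

theorem volume_crossPolytope [Nonempty ι] :
    volume (crossPolytope ι) =
      ENNReal.ofReal (2 ^ Fintype.card ι / (Fintype.card ι).factorial) := by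
  simpa [crossPolytope, Real.Gamma_nat_eq_factorial, one_add_one_eq_two] using
    volume_sum_rpow_le ι (p := 1) le_rfl 1

theorem unitBallVol_pos (n : ℕ) : 0 < unitBallVol n :=
  div_pos (Real.rpow_pos_of_pos Real.pi_pos _) (Real.Gamma_pos_of_pos (by positivity))

theorem volume_closedBall_eq_unitBallVol [Nonempty ι] (x : EuclideanSpace ℝ ι) {r : ℝ}
    (hr : 0 ≤ r) :
    volume (closedBall x r) =
      ENNReal.ofReal (r ^ Fintype.card ι * unitBallVol (Fintype.card ι)) := by
  have hpow : Real.pi ^ ((Fintype.card ι : ℝ) / 2) = √Real.pi ^ Fintype.card ι := by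
    rw [Real.sqrt_eq_rpow, ← Real.rpow_mul_natCast Real.pi_pos.le, one_div_mul_eq_div]
  rw [EuclideanSpace.volume_closedBall, ENNReal.ofReal_mul (by positivity),
    ENNReal.ofReal_pow hr, unitBallVol, hpow]

theorem norm_toLp_inner_le {e : ι → X} (he : Orthonormal ℝ e) (x : X) :
    ‖WithLp.toLp 2 fun i => ⟪e i, x⟫‖ ≤ ‖x‖ := by
  rw [EuclideanSpace.norm_eq]
  exact Real.sqrt_le_iff.2 ⟨norm_nonneg x, he.sum_inner_products_le x⟩

theorem toLin'_image_subset_of_cover [DecidableEq ι] {e v : ι → X}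
    (he : Orthonormal ℝ e) {A : Set (ι → ℝ)} {c : κ → X} {ε : ℝ}
    (hcov : Fintype.linearCombination ℝ v '' A ⊆ ⋃ k, closedBall (c k) ε) :
    Matrix.toLin' (Matrix.of fun i j => ⟪e i, v j⟫) '' A ⊆
      ⋃ k, WithLp.toLp 2 ⁻¹' closedBall (WithLp.toLp 2 fun i => ⟪e i, c k⟫) ε := by
  rintro _ ⟨x, hx, rfl⟩
  obtain ⟨k, hk⟩ := Set.mem_iUnion.1 (hcov ⟨x, hx, rfl⟩)
  refine Set.mem_iUnion.2 ⟨k, ?_⟩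
  have hcoord : Matrix.toLin' (Matrix.of fun i j => ⟪e i, v j⟫) x =
      fun i => ⟪e i, Fintype.linearCombination ℝ v x⟫ := by
    ext i
    simp [Fintype.linearCombination_apply, inner_sum, inner_smul_right, Matrix.mulVec,
      dotProduct, mul_comm]
  rw [Set.mem_preimage, mem_closedBall_iff_norm, ← WithLp.toLp_sub, hcoord]
  rw [mem_closedBall_iff_norm] at hk
  calc ‖WithLp.toLp 2 ((fun i => ⟪e i, Fintype.linearCombination ℝ v x⟫) - fun i => ⟪e i, c k⟫)‖
      = ‖WithLp.toLp 2 fun i => ⟪e i, Fintype.linearCombination ℝ v x - c k⟫‖ := by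
        simp only [inner_sub_right]; rfl
    _ ≤ ‖Fintype.linearCombination ℝ v x - c k‖ := norm_toLp_inner_le he _
    _ ≤ ε := hk

theorem abs_det_inner_mul_two_pow_le_of_cover [Fintype κ] [Nonempty ι] [DecidableEq ι]
    {e v : ι → X} (he : Orthonormal ℝ e) {c : κ → X} {ε : ℝ} (hε : 0 ≤ ε)
    (hcov : Fintype.linearCombination ℝ v '' crossPolytope ι ⊆ ⋃ k, closedBall (c k) ε) :
    |(Matrix.of fun i j => ⟪e i, v j⟫).det| * 2 ^ Fintype.card ι ≤
      Fintype.card κ * ((Fintype.card ι).factorial * unitBallVol (Fintype.card ι) *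
        ε ^ Fintype.card ι) := by
  have hball : ∀ k, volume (WithLp.toLp 2 ⁻¹' closedBall (WithLp.toLp 2 fun i => ⟪e i, c k⟫) ε) =
      ENNReal.ofReal (ε ^ Fintype.card ι * unitBallVol (Fintype.card ι)) := fun k => by
    rw [(PiLp.volume_preserving_toLp ι).measure_preimage
      isClosed_closedBall.measurableSet.nullMeasurableSet, volume_closedBall_eq_unitBallVol _ hε]
  have hvol := (measure_mono (μ := volume)
    (toLin'_image_subset_of_cover he hcov)).trans (measure_iUnion_le _)
  have hV := unitBallVol_pos (Fintype.card ι)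
  rw [Measure.addHaar_image_linearMap, LinearMap.det_toLin', volume_crossPolytope,
    ← ENNReal.ofReal_mul (abs_nonneg _)] at hvol
  simp only [hball, tsum_fintype, Finset.sum_const, Finset.card_univ] at hvol
  rw [← ENNReal.ofReal_nsmul, ENNReal.ofReal_le_ofReal_iff (by positivity), nsmul_eq_mul,
    mul_div_assoc', div_le_iff₀ (by positivity)] at hvol
  linarith

theorem det_inner_gramSchmidtNormed [LinearOrder ι] [LocallyFiniteOrderBot ι]
    (v : ι → X) :
    (Matrix.of fun i j => ⟪gramSchmidtNormed ℝ v i, v j⟫).det = ∏ i, ‖gramSchmidt ℝ v i‖ := by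
  rw [Matrix.det_of_isUpperTriangular]
  · refine Finset.prod_congr rfl fun i _ => ?_
    rw [Matrix.of_apply, gramSchmidtNormed, real_inner_smul_left, inner_gramSchmidt_self]
    rcases eq_or_ne ‖gramSchmidt ℝ v i‖ 0 with h | h
    · simp [h]
    · simp only [RCLike.ofReal_real_eq_id, id_eq]
      field_simp
  · intro i j hji
    rw [Matrix.of_apply, gramSchmidtNormed, real_inner_smul_left,
      InnerProductSpace.gramSchmidt_inv_triangular ℝ v (show j < i from hji), mul_zero]

theorem prod_norm_gramSchmidt_mul_two_pow_le_of_cover [Fintype κ] [Nonempty ι]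
    [LinearOrder ι] [LocallyFiniteOrderBot ι]
    {v : ι → X} {c : κ → X} {ε : ℝ} (hε : 0 ≤ ε)
    (hcov : Fintype.linearCombination ℝ v '' crossPolytope ι ⊆ ⋃ k, closedBall (c k) ε) :
    (∏ i, ‖gramSchmidt ℝ v i‖) * 2 ^ Fintype.card ι ≤
      Fintype.card κ * ((Fintype.card ι).factorial * unitBallVol (Fintype.card ι) *
        ε ^ Fintype.card ι) := by
  by_cases hv : ∀ i, gramSchmidtNormed ℝ v i ≠ 0
  · have he : Orthonormal ℝ (gramSchmidtNormed ℝ v) :=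
      (InnerProductSpace.gramSchmidtNormed_orthonormal' v).comp (fun i => ⟨i, hv i⟩)
        fun _ _ h => congrArg Subtype.val h
    rw [← det_inner_gramSchmidtNormed]
    exact (mul_le_mul_of_nonneg_right (le_abs_self _) (by positivity)).trans
      (abs_det_inner_mul_two_pow_le_of_cover he hε hcov)
  · push Not at hv
    obtain ⟨i, hi⟩ := hv
    have hi : gramSchmidt ℝ v i = 0 := by simpa [gramSchmidtNormed] using hi
    have hV := unitBallVol_pos (Fintype.card ι)
    rw [Finset.prod_eq_zero (Finset.mem_univ i) (by rw [hi, norm_zero]), zero_mul]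
    positivity

end Volume

section Dictionary

variable {X : Type*} [NormedAddCommGroup X] [NormedSpace ℝ X] {D : Set X}

theorem linearCombination_image_crossPolytope_subset_symConvexHull {ι : Type*} [Fintype ι]
    {g : ι → X} (hg : ∀ i, g i ∈ D) :
    Fintype.linearCombination ℝ g '' crossPolytope ι ⊆ symConvexHull D := by
  rintro _ ⟨x, hx, rfl⟩
  let σ := (Fintype.equivFin ι).symm
  refine subset_closure ⟨Fintype.card ι, x ∘ σ, g ∘ σ, fun i => hg (σ i), ?_, ?_⟩
  · exact (σ.sum_comp fun i => |x i|).trans_le hx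
  · exact (σ.sum_comp fun i => x i • g i).symm

theorem subset_symConvexHull : D ⊆ symConvexHull D := fun x hx =>
  subset_closure ⟨1, fun _ => 1, fun _ => x, fun _ => hx, by simp, by simp⟩

theorem isBounded_symConvexHull (hD : Bornology.IsBounded D) :
    Bornology.IsBounded (symConvexHull D) := by
  obtain ⟨R, hR, hDR⟩ := hD.exists_pos_norm_le
  refine (isBounded_closedBall (x := (0 : X)) (r := R)).subset
    (closure_minimal ?_ isClosed_closedBall)
  rintro _ ⟨m, c, g, hg, hc, rfl⟩
  rw [mem_closedBall_zero_iff]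
  calc ‖∑ i, c i • g i‖ ≤ ∑ i, ‖c i • g i‖ := norm_sum_le _ _
    _ ≤ ∑ i, |c i| * R := by
      gcongr with i
      rw [norm_smul, Real.norm_eq_abs]
      gcongr
      exact hDR _ (hg i)
    _ = (∑ i, |c i|) * R := (Finset.sum_mul _ _ _).symm
    _ ≤ R := mul_le_of_le_one_left hR.le hc

theorem exists_cover_of_isBounded {Y : Type*} [PseudoMetricSpace Y] [Nonempty Y] {K : Set Y}
    (hK : Bornology.IsBounded K) (n : ℕ) :
    ∃ ε, 0 < ε ∧ ∃ c : Fin (2 ^ n) → Y, K ⊆ ⋃ i, closedBall (c i) ε := by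
  obtain ⟨R, hR, hsub⟩ := hK.subset_closedBall_lt 0 (Classical.arbitrary Y)
  exact ⟨R, hR, fun _ => Classical.arbitrary Y,
    hsub.trans (Set.subset_iUnion_of_subset 0 subset_rfl)⟩

theorem varNorm_nonneg (D : Set X) (f : X) : 0 ≤ varNorm D f :=
  Real.sInf_nonneg (by
    rintro _ ⟨a, h, -, -, -, rfl⟩
    exact tsum_nonneg fun i => abs_nonneg _)

end Dictionary

section SpanFirst

variable {X : Type*} [NormedAddCommGroup X] [NormedSpace ℝ X]

instance finiteDimensional_spanFirst (g : ℕ → X) (k : ℕ) : FiniteDimensional ℝ (spanFirst g k) :=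
  FiniteDimensional.span_of_finite ℝ ((Set.finite_lt_nat k).image g)

theorem spanFirst_mono (g : ℕ → X) : Monotone (spanFirst g) := fun _ _ h =>
  Submodule.span_mono (Set.image_mono fun _ hi => lt_of_lt_of_le hi h)

theorem spanFirst_succ (g : ℕ → X) (k : ℕ) :
    spanFirst g (k + 1) = spanFirst g k ⊔ Submodule.span ℝ {g k} := by
  have hset : {i | i < k + 1} = insert k {i | i < k} := by
    ext i
    simp only [Set.mem_ofPred_eq, Set.mem_insert_iff]
    lia
  rw [spanFirst, hset, Set.image_insert_eq, Submodule.span_insert, sup_comm, spanFirst]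

theorem spanFirst_eq_span_range (g : ℕ → X) (n : ℕ) :
    spanFirst g n = Submodule.span ℝ (Set.range fun i : Fin n => g i) := by
  rw [spanFirst]
  congr 1
  ext y
  simp [Fin.exists_iff]

theorem exists_seq_forall_spanFirst {P : Submodule ℝ X → X → Prop} (h : ∀ S, ∃ x, P S x) :
    ∃ g : ℕ → X, ∀ k, P (spanFirst g k) (g k) := by
  choose pick hpick using h
  let S : ℕ → Submodule ℝ X := Nat.rec ⊥ fun _ T => T ⊔ Submodule.span ℝ {pick T}
  have hS : ∀ k, spanFirst (pick ∘ S) k = S k := fun k => by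
    induction k with
    | zero => simp [spanFirst, S]
    | succ k ih => rw [spanFirst_succ, ih]; rfl
  exact ⟨pick ∘ S, fun k => hS k ▸ hpick (S k)⟩

end SpanFirst

section Greedy

variable {X : Type*} [NormedAddCommGroup X] [InnerProductSpace ℝ X]

theorem norm_starProjection_orthogonal_sq_le {S T : Submodule ℝ X} [S.HasOrthogonalProjection]
    [T.HasOrthogonalProjection] (hST : S ≤ T) {u : X} (hu : u ∈ T) (x : X) :
    ‖Tᗮ.starProjection x‖ ^ 2 ≤
      ‖Sᗮ.starProjection x‖ ^ 2 - ⟪Sᗮ.starProjection x, u⟫ ^ 2 / ‖u‖ ^ 2 := by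
  set r := Sᗮ.starProjection x with hr
  set α := ⟪r, u⟫ / ‖u‖ ^ 2 with hα
  have hmem : x - (r - α • u) ∈ T := by
    rw [hr, Submodule.starProjection_orthogonal_val, sub_sub, sub_sub_cancel]
    exact T.add_mem (hST (S.starProjection_apply_mem x)) (T.smul_mem α hu)
  have hproj : Tᗮ.starProjection x = Tᗮ.starProjection (r - α • u) := by
    rw [← sub_eq_zero, ← map_sub, Submodule.starProjection_orthogonal_apply_eq_zero hmem]
  calc ‖Tᗮ.starProjection x‖ ^ 2 ≤ ‖r - α • u‖ ^ 2 := by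
        rw [hproj]
        gcongr
        exact Submodule.norm_starProjection_apply_le _ _
    _ = ‖r‖ ^ 2 - ⟪r, u⟫ ^ 2 / ‖u‖ ^ 2 := by
        rw [norm_sub_sq_real, inner_smul_right, norm_smul, mul_pow, Real.norm_eq_abs, sq_abs, hα]
        rcases eq_or_ne u 0 with rfl | hu0
        · simp
        · field_simp
          ring

/-- The orthogonal projection onto the complement of the span of the first `k` terms of `g`. It
sends `f` to the error of approximating `f` optimally from that span, and `g k` to the `k`-th
Gram–Schmidt vector of `g`. -/
noncomputable def spanResidual (g : ℕ → X) (k : ℕ) : X →L[ℝ] X :=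
  (spanFirst g k)ᗮ.starProjection

theorem spanResidual_eq_zero_iff {g : ℕ → X} {k : ℕ} {x : X} :
    spanResidual g k x = 0 ↔ x ∈ spanFirst g k := by
  rw [spanResidual, Submodule.starProjection_apply_eq_zero_iff, Submodule.orthogonal_orthogonal]

theorem spanResidual_apply_self (g : ℕ → X) (k : ℕ) :
    spanResidual g k (g k) = gramSchmidt ℝ g k :=
  haveI : (Submodule.span ℝ (g '' Set.Iio k)).HasOrthogonalProjection :=
    inferInstanceAs (spanFirst g k).HasOrthogonalProjection
  (gramSchmidt_eq_starProjection_orthogonal g k).symm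

theorem inner_spanResidual_gramSchmidt (g : ℕ → X) (k : ℕ) (x : X) :
    ⟪spanResidual g k x, gramSchmidt ℝ g k⟫ = ⟪spanResidual g k x, g k⟫ := by
  rw [← spanResidual_apply_self]
  exact inner_starProjection_starProjection _ x (g k)

theorem norm_spanResidual_succ_sq_le (g : ℕ → X) (k : ℕ) (x : X) :
    ‖spanResidual g (k + 1) x‖ ^ 2 ≤
      ‖spanResidual g k x‖ ^ 2 - ⟪spanResidual g k x, g k⟫ ^ 2 / ‖gramSchmidt ℝ g k‖ ^ 2 := by
  have hmem : gramSchmidt ℝ g k ∈ spanFirst g (k + 1) :=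
    Submodule.span_mono (Set.image_mono fun _ hi => Nat.lt_succ_of_le hi)
      (InnerProductSpace.gramSchmidt_mem_span ℝ g le_rfl)
  rw [← inner_spanResidual_gramSchmidt]
  exact norm_starProjection_orthogonal_sq_le (spanFirst_mono g k.le_succ) hmem x

/-- The selection rule for the terms of `g` when approximating `f`, with `t` the `ℓ¹` norm of a
representation of `f`. Unlike in `IsOGA`, the new term need not have the largest inner product with
the residual among all elements of the dictionary, so that no maximizer has to exist. -/
def IsGreedySelection (t : ℝ) (f : X) (g : ℕ → X) : Prop :=
  ∀ k, ‖spanResidual g k f‖ ^ 2 ≤ t * |⟪spanResidual g k f, g k⟫|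

variable {D : Set X} {f : X} {g : ℕ → X} {t : ℝ}

theorem IsGreedySelection.gramSchmidt_ne_zero (hg : IsGreedySelection t f g) {k n : ℕ}
    (hkn : k ≤ n) (hn : spanResidual g n f ≠ 0) : gramSchmidt ℝ g k ≠ 0 := by
  contrapose! hn
  have hk : ‖spanResidual g k f‖ ^ 2 ≤ 0 := by
    simpa [← inner_spanResidual_gramSchmidt, hn] using hg k
  rw [spanResidual_eq_zero_iff]
  exact spanFirst_mono g hkn (spanResidual_eq_zero_iff.1 (by simpa using hk))

theorem IsGreedySelection.sum_inv_norm_gramSchmidt_sq_le (hg : IsGreedySelection t f g)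
    (ht : 0 ≤ t) {n : ℕ} (hn : spanResidual g n f ≠ 0) :
    ∑ k ∈ Finset.range n, ((t * ‖gramSchmidt ℝ g k‖) ^ 2)⁻¹ ≤ (‖spanResidual g n f‖ ^ 2)⁻¹ := by
  refine sum_le_inv_of_le_sub_mul_sq (a := fun k => ‖spanResidual g k f‖ ^ 2) (by positivity)
    (fun k _ => by positivity) fun k _ => (norm_spanResidual_succ_sq_le g k f).trans ?_
  have hdiv : ‖spanResidual g k f‖ ^ 2 / t ≤ |⟪spanResidual g k f, g k⟫| :=
    div_le_of_le_mul₀ ht (abs_nonneg _) ((hg k).trans_eq (mul_comm _ _))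
  gcongr
  calc ((t * ‖gramSchmidt ℝ g k‖) ^ 2)⁻¹ * (‖spanResidual g k f‖ ^ 2) ^ 2
      = (‖spanResidual g k f‖ ^ 2 / t) ^ 2 / ‖gramSchmidt ℝ g k‖ ^ 2 := by
        rw [mul_pow, mul_inv, div_pow]
        ring
    _ ≤ ⟪spanResidual g k f, g k⟫ ^ 2 / ‖gramSchmidt ℝ g k‖ ^ 2 := by
        rw [← sq_abs ⟪_, _⟫]
        gcongr

theorem IsGreedySelection.sqrt_mul_norm_spanResidual_le (hg : IsGreedySelection t f g)
    (ht : 0 ≤ t) (n : ℕ) :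
    √n * ‖spanResidual g n f‖ ≤
      t * (∏ k ∈ Finset.range n, ‖gramSchmidt ℝ g k‖) ^ ((n : ℝ)⁻¹) := by
  rcases eq_or_ne (spanResidual g n f) 0 with hr | hr
  · rw [hr, norm_zero, mul_zero]
    positivity
  rcases n.eq_zero_or_pos with rfl | hn
  · simpa using ht
  have ht0 : t ≠ 0 := by
    rintro rfl
    exact hr (by simpa using hg n)
  have hgeom : (∏ k ∈ Finset.range n, (t * ‖gramSchmidt ℝ g k‖) ^ 2) ^ ((n : ℝ)⁻¹) =
      (t * (∏ k ∈ Finset.range n, ‖gramSchmidt ℝ g k‖) ^ ((n : ℝ)⁻¹)) ^ 2 := by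
    rw [Finset.prod_pow, Finset.prod_mul_distrib, Finset.prod_const, Finset.card_range,
      ← Real.rpow_pow_comm (by positivity), Real.mul_rpow (by positivity) (by positivity),
      Real.pow_rpow_inv_natCast ht hn.ne']
  have hz : ∀ k ∈ Finset.range n, 0 < (t * ‖gramSchmidt ℝ g k‖) ^ 2 := fun k hk => by
    have hu := hg.gramSchmidt_ne_zero (Finset.mem_range.1 hk).le hr
    positivity
  have hmean := card_le_sum_inv_mul_prod_rpow (Finset.range n) hz
  rw [Finset.card_range, hgeom] at hmean
  refine le_of_sq_le_sq ?_ (by positivity)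
  rw [mul_pow, Real.sq_sqrt n.cast_nonneg, ← le_div_iff₀ (by positivity), div_eq_inv_mul]
  exact hmean.trans (by gcongr; exact hg.sum_inv_norm_gramSchmidt_sq_le ht hr)

theorem exists_isGreedySelection {ι : Type*} [Nonempty ι] {a : ι → ℝ} {h : ι → X}
    (hh : ∀ i, h i ∈ D) (ha : Summable fun i => |a i|) (hf : HasSum (fun i => a i • h i) f) :
    ∃ g : ℕ → X, (∀ k, g k ∈ D) ∧ IsGreedySelection (∑' i, |a i|) f g := by
  have hpick : ∀ S : Submodule ℝ X, ∃ x ∈ D, ∀ [S.HasOrthogonalProjection],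
      ‖Sᗮ.starProjection f‖ ^ 2 ≤ (∑' i, |a i|) * |⟪Sᗮ.starProjection f, x⟫| := fun S => by
    by_cases hS : S.HasOrthogonalProjection
    · have hsum : HasSum (fun i => a i * ⟪Sᗮ.starProjection f, h i⟫)
          (‖Sᗮ.starProjection f‖ ^ 2) := by
        rw [← real_inner_self_eq_norm_sq, inner_starProjection_starProjection]
        simpa only [innerSL_apply_apply, inner_smul_right] using
          hf.mapL (innerSL ℝ (Sᗮ.starProjection f))
      obtain ⟨i, hi⟩ := exists_le_tsum_abs_mul_abs ha hsum
      exact ⟨h i, hh i, hi⟩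
    · obtain ⟨i⟩ := ‹Nonempty ι›
      exact ⟨h i, hh i, fun {hS'} => absurd hS' hS⟩
  obtain ⟨g, hg⟩ := exists_seq_forall_spanFirst hpick
  exact ⟨g, fun k => (hg k).1, fun k => (hg k).2⟩

theorem bestNTermError_le_norm_spanResidual (hg : ∀ i, g i ∈ D) (n : ℕ) (f : X) :
    bestNTermError D n f ≤ ‖spanResidual g n f‖ := by
  have hmem := (spanFirst_eq_span_range g n).le ((spanFirst g n).starProjection_apply_mem f)
  obtain ⟨c, hc⟩ := (Submodule.mem_span_range_iff_exists_fun ℝ).1 hmem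
  refine csInf_le ⟨0, ?_⟩ ⟨c, fun i => g i, fun i => hg i, ?_⟩
  · rintro _ ⟨c, g, -, rfl⟩
    exact norm_nonneg _
  · rw [hc, spanResidual, Submodule.starProjection_orthogonal_val]

end Greedy

section Entropy

variable {X : Type*} [NormedAddCommGroup X] [InnerProductSpace ℝ X] {D : Set X}

theorem prod_norm_gramSchmidt_le_of_cover {g : ℕ → X} (hg : ∀ k, g k ∈ D) {n : ℕ} (hn : 1 ≤ n)
    {ε : ℝ} (hε : 0 ≤ ε) {c : Fin (2 ^ n) → X}
    (hcov : symConvexHull D ⊆ ⋃ i, closedBall (c i) ε) :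
    ∏ k ∈ Finset.range n, ‖gramSchmidt ℝ g k‖ ≤ n.factorial * unitBallVol n * ε ^ n := by
  have : Nonempty (Fin n) := ⟨⟨0, hn⟩⟩
  have hvol := prod_norm_gramSchmidt_mul_two_pow_le_of_cover hε
    ((linearCombination_image_crossPolytope_subset_symConvexHull
      fun i : Fin n => hg i).trans hcov)
  simp only [gramSchmidt_comp_finVal, Fintype.card_fin, Nat.cast_pow, Nat.cast_ofNat] at hvol
  rw [Finset.prod_range]
  exact le_of_mul_le_mul_right (hvol.trans_eq (mul_comm _ _)) (by positivity)

theorem bestNTermError_le_of_hasSum_of_cover {ι : Type*} [Nonempty ι] {a : ι → ℝ} {h : ι → X}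
    {f : X} (hh : ∀ i, h i ∈ D) (ha : Summable fun i => |a i|)
    (hf : HasSum (fun i => a i • h i) f) {n : ℕ} (hn : 1 ≤ n) {ε : ℝ} (hε : 0 ≤ ε)
    {c : Fin (2 ^ n) → X} (hcov : symConvexHull D ⊆ ⋃ i, closedBall (c i) ε) :
    bestNTermError D n f ≤
      (n.factorial * unitBallVol n) ^ ((n : ℝ)⁻¹) / √n * (∑' i, |a i|) * ε := by
  obtain ⟨g, hgD, hg⟩ := exists_isGreedySelection hh ha hf
  have ht : 0 ≤ ∑' i, |a i| := tsum_nonneg fun i => abs_nonneg _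
  have hV := unitBallVol_pos n
  have hsqrt : 0 < √n := Real.sqrt_pos.2 (Nat.cast_pos.2 hn)
  refine (bestNTermError_le_norm_spanResidual hgD n f).trans
    (le_of_mul_le_mul_left (a := √n) ?_ hsqrt)
  calc √n * ‖spanResidual g n f‖
      ≤ (∑' i, |a i|) * (∏ k ∈ Finset.range n, ‖gramSchmidt ℝ g k‖) ^ ((n : ℝ)⁻¹) :=
        hg.sqrt_mul_norm_spanResidual_le ht n
    _ ≤ (∑' i, |a i|) * (n.factorial * unitBallVol n * ε ^ n) ^ ((n : ℝ)⁻¹) := by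
        gcongr
        exact prod_norm_gramSchmidt_le_of_cover hgD hn hε hcov
    _ = (∑' i, |a i|) * ((n.factorial * unitBallVol n) ^ ((n : ℝ)⁻¹) * ε) := by
        rw [Real.mul_rpow (by positivity) (by positivity),
          Real.pow_rpow_inv_natCast hε (Nat.one_le_iff_ne_zero.1 hn)]
    _ = √n * ((n.factorial * unitBallVol n) ^ ((n : ℝ)⁻¹) / √n * (∑' i, |a i|) * ε) := by
        field_simp

theorem bestNTermError_le_entropy_general (hD : Bornology.IsBounded D) {f : X}
    (hf : HasL1Rep D f) {n : ℕ} (hn : 1 ≤ n) :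
    bestNTermError D n f ≤
      (n.factorial * unitBallVol n) ^ ((n : ℝ)⁻¹) / √n *
        varNorm D f * entropyNumber n (symConvexHull D) := by
  have hV := unitBallVol_pos n
  have hvar := varNorm_nonneg D f
  refine le_mul_csInf (exists_cover_of_isBounded (isBounded_symConvexHull hD) n)
    (by positivity) ?_
  rintro ε ⟨hε, c, hcov⟩
  rw [mul_right_comm]
  refine le_mul_csInf ?_ (by positivity) ?_
  · obtain ⟨a, h, hh, ha, hf⟩ := hf
    exact ⟨_, a, h, hh, ha, hf, rfl⟩
  · rintro _ ⟨a, h, hh, ha, hf, rfl⟩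
    rw [mul_right_comm]
    exact bestNTermError_le_of_hasSum_of_cover hh ha hf hn hε.le hcov

end Entropy

/-- entropy-based bound for the best `n`-term approximation error of
a function of finite variation norm. -/
theorem bestNTermError_le_entropy
    {X : Type*} [NormedAddCommGroup X] [InnerProductSpace ℝ X] [CompleteSpace X]
    (D : Set X) (hD : IsCompact (symConvexHull D))
    (f : X) (hf : HasL1Rep D f) (n : ℕ) (hn : 1 ≤ n) :
    bestNTermError D n f
      ≤ ((n.factorial : ℝ) * unitBallVol n) ^ ((n : ℝ)⁻¹) / Real.sqrt n *
          varNorm D f * entropyNumber n (symConvexHull D) :=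
  bestNTermError_le_entropy_general (hD.isBounded.subset subset_symConvexHull) hf hn
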